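/- arXiv:2501.11215 — 2 statements merged into one kernel-verified Lean document; each statement's English description precedes it below -/
import Mathlib

section
/- For every integer n ≥ 1 there exists a connected combinatorial hypermap H_n with exactly n hyperedges (the hyper-ladder map) whose partial-dual Euler-genus polynomial is ∂ε_{H_n}(z) = 2·(1 + z²)^{n−1}. -/
open Classical

/-- A pre-hypermap on a set of flags `F`: three structure maps `θ₀, θ₁, θ₂`.
It is a genuine combinatorial hypermap when the three maps are
fixed-point-free involutions (see `PreHypermap.IsHypermap`). -/
structure PreHypermap (F : Type*) where
  theta : Fin 3 → F → F

namespace PreHypermap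

variable {F : Type*}

/-- `H` is a combinatorial hypermap: `θ₀, θ₁, θ₂` are fixed-point-free involutions. -/
def IsHypermap (H : PreHypermap F) : Prop :=
  ∀ i : Fin 3, Function.Involutive (H.theta i) ∧ ∀ x : F, H.theta i x ≠ x

/-- The equivalence relation on `F` generated by a set of functions `F → F`;
for a set of involutions, two flags are related iff they are in the same orbit
of the subgroup generated by those involutions. -/
def orbitRel (fs : Set (F → F)) : F → F → Prop :=
  Relation.EqvGen (fun x y => ∃ f ∈ fs, f x = y)

/-- The setoid of orbits of the subgroup generated by a set of involutions. -/
def orbitSetoid (fs : Set (F → F)) : Setoid F :=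
  Relation.EqvGen.setoid (fun x y => ∃ f ∈ fs, f x = y)

/-- The number of orbits on `F` of the subgroup generated by a set of involutions. -/
noncomputable def orbitCount (fs : Set (F → F)) : ℕ :=
  Nat.card (Quotient (orbitSetoid fs))

/-- `v H`: the number of vertices, i.e. orbits of `⟨θ₁, θ₂⟩`. -/
noncomputable def v (H : PreHypermap F) : ℕ := orbitCount {H.theta 1, H.theta 2}

/-- `e H`: the number of hyperedges, i.e. orbits of `⟨θ₀, θ₂⟩`. -/
noncomputable def e (H : PreHypermap F) : ℕ := orbitCount {H.theta 0, H.theta 2}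

/-- `f H`: the number of faces, i.e. orbits of `⟨θ₀, θ₁⟩`. -/
noncomputable def f (H : PreHypermap F) : ℕ := orbitCount {H.theta 0, H.theta 1}

/-- `c H`: the number of components, i.e. orbits of `⟨θ₀, θ₁, θ₂⟩`. -/
noncomputable def c (H : PreHypermap F) : ℕ :=
  orbitCount {H.theta 0, H.theta 1, H.theta 2}

/-- `H` is connected if it has exactly one component. -/
def Connected (H : PreHypermap F) : Prop := H.c = 1

/-- The Euler characteristic `χ(H) = v + e + f - |F|/2`. -/
noncomputable def chi (H : PreHypermap F) : ℤ :=
  (H.v : ℤ) + (H.e : ℤ) + (H.f : ℤ) - (Nat.card F : ℤ) / 2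

/-- The Euler genus `ε(H) = 2 c(H) - χ(H)`. -/
noncomputable def eulerGenus (H : PreHypermap F) : ℤ := 2 * (H.c : ℤ) - H.chi

/-- `H` is orientable: there is `o : F → {+1, -1}` with `o (θᵢ x) = - o x` for all `i, x`. -/
def Orientable (H : PreHypermap F) : Prop :=
  ∃ o : F → ℤ, (∀ x : F, o x = 1 ∨ o x = -1) ∧
    ∀ (i : Fin 3) (x : F), o (H.theta i x) = - o x

/-- The set `E(H)` of hyperedges of `H`, each hyperedge being its set of flags
(an orbit of `⟨θ₀, θ₂⟩`). -/
def edges (H : PreHypermap F) : Set (Set F) :=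
  {s : Set F | ∃ x : F, s = {y : F | orbitRel {H.theta 0, H.theta 2} x y}}

/-- The geometric dual `H* = (F, θ₂, θ₁, θ₀)`. -/
def dual (H : PreHypermap F) : PreHypermap F where
  theta := fun i => H.theta (2 - i)

/-- The partial dual of `H` with respect to a set `S` of flags (interchange `θ₀` and
`θ₂` on `S`); for `A ⊆ E(H)` the partial dual `H^A` is `H.pdual (⋃₀ A)`. -/
noncomputable def pdual (H : PreHypermap F) (S : Set F) : PreHypermap F where
  theta := fun i x =>
    if i = 1 then H.theta 1 x
    else if x ∈ S then H.theta (2 - i) x else H.theta i x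

/-- `f(A)` for `A ⊆ E(H)`: the number of orbits of `⟨θ₁, θ₂^A⟩` (which equals `v(H^A)`). -/
noncomputable def subf (H : PreHypermap F) (A : Set (Set F)) : ℕ :=
  (H.pdual (⋃₀ A)).v

/-- `c(A)` for `A ⊆ E(H)`: the number of orbits of the subgroup generated by `θ₁`, `θ₂`
and the permutation equal to `θ₀` on `S(A)` and the identity elsewhere. -/
noncomputable def subc (H : PreHypermap F) (A : Set (Set F)) : ℕ :=
  orbitCount {H.theta 1, H.theta 2, fun x => if x ∈ ⋃₀ A then H.theta 0 x else x}

/-- `χ(A) = v(A) + e(A) + f(A) - |S(A)|/2` for `A ⊆ E(H)`, where `v(A) = v(H)`,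
`e(A) = |A|`, `f(A) = v(H^A)` and `S(A) = ⋃₀ A`. -/
noncomputable def subchi (H : PreHypermap F) (A : Set (Set F)) : ℤ :=
  (H.v : ℤ) + (A.ncard : ℤ) + (H.subf A : ℤ) - ((⋃₀ A).ncard : ℤ) / 2

/-- `ε(A) = 2 c(A) - χ(A)` for `A ⊆ E(H)`. -/
noncomputable def subeps (H : PreHypermap F) (A : Set (Set F)) : ℤ :=
  2 * (H.subc A : ℤ) - H.subchi A

/-- The hyperedge set of `H` as a finset. -/
noncomputable def edgeFinset (H : PreHypermap F) [Fintype F] : Finset (Set F) :=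
  (Set.toFinite H.edges).toFinset

/-- The partial-dual Euler-genus polynomial `∂ε_H(z) = Σ_{A ⊆ E(H)} z^(ε(H^A))`. -/
noncomputable def pdPoly (H : PreHypermap F) [Fintype F] : Polynomial ℕ :=
  ∑ A ∈ H.edgeFinset.powerset,
    Polynomial.X ^ ((H.pdual (⋃₀ (A : Set (Set F)))).eulerGenus).toNat

/-- The partial-dual orientable-genus polynomial `∂Γ_H(z) = Σ_{A ⊆ E(H)} z^(ε(H^A)/2)`. -/
noncomputable def pdGammaPoly (H : PreHypermap F) [Fintype F] : Polynomial ℕ :=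
  ∑ A ∈ H.edgeFinset.powerset,
    Polynomial.X ^ (((H.pdual (⋃₀ (A : Set (Set F)))).eulerGenus) / 2).toNat

/-- The join `H₁ ∨ H₂` of two hypermaps on disjoint flag sets, joining the corner
`{x, θ₁ x}` of `H₁` to the corner `{y, θ₁′ y}` of `H₂`. -/
noncomputable def join {F₁ F₂ : Type*} (H₁ : PreHypermap F₁) (H₂ : PreHypermap F₂)
    (x : F₁) (y : F₂) : PreHypermap (F₁ ⊕ F₂) where
  theta := fun i z =>
    if i = 1 then
      if z = Sum.inl x then Sum.inr y
      else if z = Sum.inr y then Sum.inl x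
      else if z = Sum.inl (H₁.theta 1 x) then Sum.inr (H₂.theta 1 y)
      else if z = Sum.inr (H₂.theta 1 y) then Sum.inl (H₁.theta 1 x)
      else Sum.map (H₁.theta 1) (H₂.theta 1) z
    else Sum.map (H₁.theta i) (H₂.theta i) z

/-- The bar-amalgamation `H₁ ⊕ H₂` of two hypermaps on disjoint flag sets, with a new
connecting hyperedge `{p, q, p', q'} = Fin 4` meeting the corner `{x, θ₁ x}` of `H₁`
and the corner `{y, θ₁′ y}` of `H₂`. -/
noncomputable def bar {F₁ F₂ : Type*} (H₁ : PreHypermap F₁) (H₂ : PreHypermap F₂)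
    (x : F₁) (y : F₂) : PreHypermap ((F₁ ⊕ F₂) ⊕ Fin 4) where
  theta := fun i z =>
    if i = 0 then
      match z with
      | .inl (.inl a) => .inl (.inl (H₁.theta 0 a))
      | .inl (.inr b) => .inl (.inr (H₂.theta 0 b))
      | .inr k => .inr (Equiv.swap (0 : Fin 4) 2 (Equiv.swap (1 : Fin 4) 3 k))
    else if i = 2 then
      match z with
      | .inl (.inl a) => .inl (.inl (H₁.theta 2 a))
      | .inl (.inr b) => .inl (.inr (H₂.theta 2 b))
      | .inr k => .inr (Equiv.swap (0 : Fin 4) 1 (Equiv.swap (2 : Fin 4) 3 k))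
    else
      if z = .inl (.inl x) then .inr 0
      else if z = .inr 0 then .inl (.inl x)
      else if z = .inl (.inl (H₁.theta 1 x)) then .inr 1
      else if z = .inr 1 then .inl (.inl (H₁.theta 1 x))
      else if z = .inl (.inr y) then .inr 2
      else if z = .inr 2 then .inl (.inr y)
      else if z = .inl (.inr (H₂.theta 1 y)) then .inr 3
      else if z = .inr 3 then .inl (.inr (H₂.theta 1 y))
      else
        match z with
        | .inl (.inl a) => .inl (.inl (H₁.theta 1 a))
        | .inl (.inr b) => .inl (.inr (H₂.theta 1 b))
        | .inr k => .inr k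

end PreHypermap

namespace PreHypermap

theorem orbitCount_of_section {F T : Type*} (fs : Set (F → F)) (g : F → T) (s : T → F)
    (hg : ∀ f ∈ fs, ∀ x, g (f x) = g x) (hgs : ∀ t, g (s t) = t)
    (hs : ∀ x, orbitRel fs x (s (g x))) :
    (∀ x y, orbitRel fs x y ↔ g x = g y) ∧ orbitCount fs = Nat.card T := by
  have h1 : ∀ x y, orbitRel fs x y → g x = g y := by
    intro x y h
    induction h with
    | rel x y h => obtain ⟨f, hf, rfl⟩ := h; exact (hg f hf x).symm
    | refl x => rfl
    | symm x y _ ih => exact ih.symm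
    | trans x y z _ _ ih1 ih2 => exact ih1.trans ih2
  have h2 : ∀ x y, orbitRel fs x y ↔ g x = g y := by
    intro x y
    refine ⟨h1 x y, fun h => ?_⟩
    have hx := hs x
    rw [h] at hx
    exact Relation.EqvGen.trans _ _ _ hx (Relation.EqvGen.symm _ _ (hs y))
  refine ⟨h2, ?_⟩
  refine Nat.card_congr (Equiv.ofBijective
    (Quotient.lift (s := orbitSetoid fs) g (fun x y h => h1 x y h)) ⟨?_, ?_⟩)
  · intro a b
    induction a using Quotient.inductionOn
    induction b using Quotient.inductionOn
    intro h
    exact Quotient.sound ((h2 _ _).2 h)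
  · intro t
    exact ⟨Quotient.mk (orbitSetoid fs) (s t), hgs t⟩

theorem pdPoly_eq {F E : Type} [Fintype F] [Fintype E] (H : PreHypermap F) (g : F → E)
    (hsurj : Function.Surjective g)
    (h : ∀ x y, orbitRel {H.theta 0, H.theta 2} x y ↔ g x = g y) :
    H.pdPoly = ∑ B ∈ (Finset.univ : Finset E).powerset,
      Polynomial.X ^ ((H.pdual {x | g x ∈ B}).eulerGenus).toNat := by
  set φ : E → Set F := fun t => {y | g y = t} with hφ
  have hinj : Function.Injective φ := by
    intro a b hab
    obtain ⟨x, rfl⟩ := hsurj a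
    have : x ∈ φ b := by rw [← hab]; exact rfl
    exact this
  have he : H.edgeFinset = Finset.univ.image φ := by
    ext s
    simp only [edgeFinset, Set.Finite.mem_toFinset, edges, Set.mem_ofPred_eq, Finset.mem_image,
      Finset.mem_univ, true_and, h]
    constructor
    · rintro ⟨x, rfl⟩
      exact ⟨g x, by ext y; simp [hφ, eq_comm]⟩
    · rintro ⟨t, rfl⟩
      obtain ⟨x, rfl⟩ := hsurj t
      exact ⟨x, by ext y; simp [hφ, eq_comm]⟩
  rw [pdPoly, he, Finset.powerset_image, Finset.sum_image]
  · refine Finset.sum_congr rfl fun B _ => ?_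
    congr 4
    ext x
    simp [hφ]
  · intro a _ b _ hab
    exact Finset.image_injective hinj hab

def p0 : Fin 4 → Fin 4 := ![1, 0, 3, 2]
def p2 : Fin 4 → Fin 4 := ![3, 2, 1, 0]

/-- flags of the ladder -/
abbrev LF (k : ℕ) : Type := Fin (k + 1) × Bool × Fin 4

def t0 (k : ℕ) (x : LF k) : LF k := (x.1, x.2.1, p0 x.2.2)
def t1 (k : ℕ) (x : LF k) : LF k := (x.1, !x.2.1, x.2.2)
def t2 (k : ℕ) : LF k → LF k
  | (i, false, j) => (i, false, p2 j)
  | (i, true, 0) => (i - 1, true, 3)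
  | (i, true, 1) => (i, true, 2)
  | (i, true, 2) => (i, true, 1)
  | (i, true, 3) => (i + 1, true, 0)

def ladder (k : ℕ) : PreHypermap (LF k) where
  theta := ![t0 k, t1 k, t2 k]

def eg (k : ℕ) : LF k → Option (Fin (k + 1))
  | (i, false, _) => some i
  | (_, true, _) => none

theorem t0_inv (k : ℕ) (x : LF k) : t0 k (t0 k x) = x := by
  obtain ⟨i, b, j⟩ := x
  fin_cases j <;> rfl

theorem t1_inv (k : ℕ) (x : LF k) : t1 k (t1 k x) = x := by
  obtain ⟨i, b, j⟩ := x
  cases b <;> rfl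

theorem t2_inv (k : ℕ) (x : LF k) : t2 k (t2 k x) = x := by
  obtain ⟨i, b, j⟩ := x
  cases b <;> fin_cases j <;> simp [t2, p2]

theorem ladder_isHypermap (k : ℕ) : (ladder k).IsHypermap := by
  intro i
  fin_cases i
  · refine ⟨t0_inv k, ?_⟩
    rintro ⟨i, b, j⟩
    fin_cases j <;> simp [ladder, t0, p0]
  · refine ⟨t1_inv k, ?_⟩
    rintro ⟨i, b, j⟩
    simp [ladder, t1]
  · refine ⟨t2_inv k, ?_⟩
    rintro ⟨i, b, j⟩
    cases b <;> fin_cases j <;> simp [ladder, t2, p2]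

/-- central hyperedge uses `θ₀`, leaf `i` uses `θ₂` iff `i ∈ D` -/
noncomputable def h0 (k : ℕ) (D : Finset (Fin (k + 1))) : LF k → LF k
  | (i, true, j) => t0 k (i, true, j)
  | (i, false, j) => if i ∈ D then t2 k (i, false, j) else t0 k (i, false, j)

/-- central hyperedge uses `θ₂`, leaf `i` uses `θ₀` iff `i ∈ D` -/
noncomputable def h2 (k : ℕ) (D : Finset (Fin (k + 1))) : LF k → LF k
  | (i, true, j) => t2 k (i, true, j)
  | (i, false, j) => if i ∈ D then t0 k (i, false, j) else t2 k (i, false, j)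

theorem step {F : Type*} {fs : Set (F → F)} (f : F → F) (hf : f ∈ fs) {x y : F}
    (h : orbitRel fs (f x) y) : orbitRel fs x y :=
  Relation.EqvGen.trans _ _ _ (Relation.EqvGen.rel _ _ ⟨f, hf, rfl⟩) h

theorem orefl {F : Type*} {fs : Set (F → F)} (x : F) : orbitRel fs x x :=
  Relation.EqvGen.refl _

theorem osymm {F : Type*} {fs : Set (F → F)} {x y : F} (h : orbitRel fs x y) :
    orbitRel fs y x :=
  Relation.EqvGen.symm _ _ h

theorem card_compl (k : ℕ) (D : Finset (Fin (k + 1))) :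
    Nat.card {i // i ∉ D} = k + 1 - D.card := by
  rw [Nat.card_eq_fintype_card, Fintype.card_subtype_compl]
  simp

theorem count_h0 (k : ℕ) (D : Finset (Fin (k + 1))) :
    orbitCount {h0 k D, t1 k} = (k + 1) + (k + 1 - D.card) := by
  have m0 : h0 k D ∈ ({h0 k D, t1 k} : Set (LF k → LF k)) := by simp
  have m1 : t1 k ∈ ({h0 k D, t1 k} : Set (LF k → LF k)) := by simp
  rw [(orbitCount_of_section (T := Fin (k + 1) ⊕ {i // i ∉ D}) _
    (fun x => if h : x.1 ∈ D then Sum.inl x.1 else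
      if x.2.2 = 0 ∨ x.2.2 = 1 then Sum.inl x.1 else Sum.inr ⟨x.1, h⟩)
    (Sum.elim (fun i => (i, true, 0)) (fun i => (i.1, true, 2))) ?_ ?_ ?_).2]
  · rw [Nat.card_sum, card_compl]; simp
  · rintro f (rfl | rfl) ⟨i, b, j⟩
    · by_cases hi : i ∈ D <;> cases b <;> fin_cases j <;> simp [h0, t0, t2, p0, p2, hi]
    · by_cases hi : i ∈ D <;> cases b <;> fin_cases j <;> simp [t1, hi]
  · rintro (i | ⟨i, hi⟩)
    · simp
    · simp [hi]
  · have key : ∀ i j, orbitRel {h0 k D, t1 k} (i, true, j)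
        (Sum.elim (fun i => (i, true, 0)) (fun i => (i.1, true, 2))
          (if h : i ∈ D then Sum.inl i else
      if j = 0 ∨ j = 1 then (Sum.inl i : Fin (k + 1) ⊕ {i // i ∉ D}) else Sum.inr ⟨i, h⟩)) := by
      intro i j
      have a1 : orbitRel {h0 k D, t1 k} (i, true, 1) (i, true, 0) :=
        step _ m0 (by simpa [h0, t0, p0] using orefl _)
      have a3 : orbitRel {h0 k D, t1 k} (i, true, 3) (i, true, 2) :=
        step _ m0 (by simpa [h0, t0, p0] using orefl _)
      by_cases hi : i ∈ D
      · have a2 : orbitRel {h0 k D, t1 k} (i, true, 2) (i, true, 0) := by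
          refine step _ m1 (step _ m0 (step _ m1 ?_))
          simpa [h0, t2, p2, t1, hi] using a1
        fin_cases j <;> simp [hi]
        · exact orefl _
        · exact a1
        · exact a2
        · exact Relation.EqvGen.trans _ _ _ a3 a2
      · fin_cases j <;> simp [hi]
        · exact orefl _
        · exact a1
        · exact orefl _
        · exact a3
    rintro ⟨i, b, j⟩
    cases b
    · exact step _ m1 (key i j)
    · exact key i j

theorem count_h2 (k : ℕ) (D : Finset (Fin (k + 1))) :
    orbitCount {h2 k D, t1 k} = (k + 1 - D.card) + 1 := by
  have m0 : h2 k D ∈ ({h2 k D, t1 k} : Set (LF k → LF k)) := by simp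
  have m1 : t1 k ∈ ({h2 k D, t1 k} : Set (LF k → LF k)) := by simp
  rw [(orbitCount_of_section (T := Option {i // i ∉ D}) _
    (fun x => if h : x.1 ∈ D then none else
      if x.2.2 = 1 ∨ x.2.2 = 2 then some ⟨x.1, h⟩ else none)
    (fun o => o.elim (0, true, 0) (fun i => (i.1, true, 1))) ?_ ?_ ?_).2]
  · rw [Finite.card_option, card_compl]
  · rintro f (rfl | rfl) ⟨i, b, j⟩
    · by_cases hi : i ∈ D <;> cases b <;> fin_cases j <;> simp [h2, t0, t2, p0, p2, hi]
    · by_cases hi : i ∈ D <;> cases b <;> fin_cases j <;> simp [t1, hi]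
  · rintro (_ | ⟨i, hi⟩)
    · simp
    · simp [hi]
  · have b21 : ∀ i, orbitRel {h2 k D, t1 k} (i, true, 2) (i, true, 1) := fun i =>
      step _ m0 (by simpa [h2, t2] using orefl _)
    have b30 : ∀ i, orbitRel {h2 k D, t1 k} (i, true, 3) (i + 1, true, 0) := fun i =>
      step _ m0 (by simpa [h2, t2] using orefl _)
    have b10 : ∀ i ∈ D, orbitRel {h2 k D, t1 k} (i, true, 1) (i, true, 0) := fun i hi =>
      step _ m1 (step _ m0 (step _ m1 (by simpa [h2, t0, p0, t1, hi] using orefl _)))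
    have b23 : ∀ i ∈ D, orbitRel {h2 k D, t1 k} (i, true, 2) (i, true, 3) := fun i hi =>
      step _ m1 (step _ m0 (step _ m1 (by simpa [h2, t0, p0, t1, hi] using orefl _)))
    have b03 : ∀ i, orbitRel {h2 k D, t1 k} (i, true, 0) (i, true, 3) := by
      intro i
      by_cases hi : i ∈ D
      · exact Relation.EqvGen.trans _ _ _ (osymm (b10 i hi))
          (Relation.EqvGen.trans _ _ _ (osymm (b21 i)) (b23 i hi))
      · exact step _ m1 (step _ m0 (step _ m1 (by simpa [h2, t2, p2, t1, hi] using orefl _)))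
    have c0 : ∀ i, orbitRel {h2 k D, t1 k} (i, true, 0) (0, true, 0) := by
      intro i
      induction i using Fin.induction with
      | zero => exact orefl _
      | succ i ih =>
        have := Relation.EqvGen.trans _ _ _ (b03 i.castSucc) (b30 i.castSucc)
        rw [Fin.coeSucc_eq_succ] at this
        exact Relation.EqvGen.trans _ _ _ (osymm this) ih
    have c3 : ∀ i, orbitRel {h2 k D, t1 k} (i, true, 3) (0, true, 0) := fun i =>
      Relation.EqvGen.trans _ _ _ (b30 i) (c0 _)
    have key : ∀ i j, orbitRel {h2 k D, t1 k} (i, true, j)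
        (Option.elim (if h : i ∈ D then none else
      if j = 1 ∨ j = 2 then (some ⟨i, h⟩ : Option {i // i ∉ D}) else none)
        (0, true, 0) (fun i => (i.1, true, 1))) := by
      intro i j
      by_cases hi : i ∈ D
      · fin_cases j <;> simp [hi]
        · exact c0 i
        · exact Relation.EqvGen.trans _ _ _ (b10 i hi) (c0 i)
        · exact Relation.EqvGen.trans _ _ _ (b23 i hi) (c3 i)
        · exact c3 i
      · fin_cases j <;> simp [hi]
        · exact c0 i
        · exact orefl _
        · exact b21 i
        · exact c3 i
    rintro ⟨i, b, j⟩
    cases b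
    · exact step _ m1 (key i j)
    · exact key i j

theorem pd_some (k : ℕ) (D : Finset (Fin (k + 1))) :
    ((ladder k).pdual {x | eg k x ∈ D.image some}).theta = ![h0 k D, t1 k, h2 k D] := by
  funext a ⟨i, b, j⟩
  fin_cases a <;> cases b <;> simp [pdual, ladder, eg, h0, h2]

theorem pd_none (k : ℕ) (D : Finset (Fin (k + 1))) :
    ((ladder k).pdual {x | eg k x ∈ insert none (D.image some)}).theta
      = ![h2 k Dᶜ, t1 k, h0 k Dᶜ] := by
  funext a ⟨i, b, j⟩
  fin_cases a <;> cases b <;> by_cases hi : i ∈ D <;> simp [pdual, ladder, eg, h0, h2, hi]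

theorem edges_h (k : ℕ) (D : Finset (Fin (k + 1))) :
    (∀ x y, orbitRel {h0 k D, h2 k D} x y ↔ eg k x = eg k y) ∧
      orbitCount {h0 k D, h2 k D} = k + 2 := by
  have m0 : h0 k D ∈ ({h0 k D, h2 k D} : Set (LF k → LF k)) := by simp
  have m2 : h2 k D ∈ ({h0 k D, h2 k D} : Set (LF k → LF k)) := by simp
  have := orbitCount_of_section {h0 k D, h2 k D} (eg k)
    (fun o => o.elim (0, true, 0) (fun i => (i, false, 0))) ?_ ?_ ?_
  · refine ⟨this.1, this.2.trans ?_⟩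
    rw [Finite.card_option]; simp
  · rintro f (rfl | rfl) ⟨i, b, j⟩
    · by_cases hi : i ∈ D <;> cases b <;> fin_cases j <;> simp [h0, t0, t2, eg, hi]
    · by_cases hi : i ∈ D <;> cases b <;> fin_cases j <;> simp [h2, t0, t2, eg, hi]
  · rintro (_ | i) <;> rfl
  · have b1 : ∀ i, orbitRel {h0 k D, h2 k D} (i, true, 1) (i, true, 0) := fun i =>
      step _ m0 (by simpa [h0, t0, p0] using orefl _)
    have b2 : ∀ i, orbitRel {h0 k D, h2 k D} (i, true, 2) (i, true, 0) := fun i =>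
      step _ m2 (by simpa [h2, t2] using b1 i)
    have b3 : ∀ i, orbitRel {h0 k D, h2 k D} (i, true, 3) (i, true, 0) := fun i =>
      step _ m0 (by simpa [h0, t0, p0] using b2 i)
    have b4 : ∀ i, orbitRel {h0 k D, h2 k D} (i, true, 3) (i + 1, true, 0) := fun i =>
      step _ m2 (by simpa [h2, t2] using orefl _)
    have c0 : ∀ i, orbitRel {h0 k D, h2 k D} (i, true, 0) (0, true, 0) := by
      intro i
      induction i using Fin.induction with
      | zero => exact orefl _
      | succ i ih =>
        have := Relation.EqvGen.trans _ _ _ (osymm (b3 i.castSucc)) (b4 i.castSucc)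
        rw [Fin.coeSucc_eq_succ] at this
        exact Relation.EqvGen.trans _ _ _ (osymm this) ih
    have l1 : ∀ i, orbitRel {h0 k D, h2 k D} (i, false, 1) (i, false, 0) := by
      intro i
      by_cases hi : i ∈ D
      · exact step _ m2 (by simpa [h2, t0, p0, hi] using orefl _)
      · exact step _ m0 (by simpa [h0, t0, p0, hi] using orefl _)
    have l3 : ∀ i, orbitRel {h0 k D, h2 k D} (i, false, 3) (i, false, 0) := by
      intro i
      by_cases hi : i ∈ D
      · exact step _ m0 (by simpa [h0, t2, p2, hi] using orefl _)
      · exact step _ m2 (by simpa [h2, t2, p2, hi] using orefl _)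
    have l2 : ∀ i, orbitRel {h0 k D, h2 k D} (i, false, 2) (i, false, 0) := by
      intro i
      by_cases hi : i ∈ D
      · exact step _ m0 (by simpa [h0, t2, p2, hi] using l1 i)
      · exact step _ m2 (by simpa [h2, t2, p2, hi] using l1 i)
    rintro ⟨i, b, j⟩
    cases b
    · fin_cases j
      · exact orefl _
      · exact l1 i
      · exact l2 i
      · exact l3 i
    · fin_cases j
      · exact c0 i
      · exact Relation.EqvGen.trans _ _ _ (b1 i) (c0 i)
      · exact Relation.EqvGen.trans _ _ _ (b2 i) (c0 i)
      · exact Relation.EqvGen.trans _ _ _ (b3 i) (c0 i)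

theorem conn_h (k : ℕ) (D : Finset (Fin (k + 1))) (fs : Set (LF k → LF k))
    (H0 : h0 k D ∈ fs) (H1 : t1 k ∈ fs) (H2 : h2 k D ∈ fs) : orbitCount fs = 1 := by
  have mono : ∀ x y, orbitRel {h0 k D, h2 k D} x y → orbitRel fs x y := by
    intro x y h
    refine Relation.EqvGen.mono ?_ _ _ h
    rintro a b ⟨f, (rfl | rfl), h⟩
    · exact ⟨_, H0, h⟩
    · exact ⟨_, H2, h⟩
  rw [(orbitCount_of_section (T := Unit) fs (fun _ => ()) (fun _ => (0, true, 0))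
    (by simp) (by simp) ?_).2]
  · simp
  · rintro ⟨i, b, j⟩
    cases b
    · exact step _ H1 (mono _ _ (((edges_h k D).1 _ _).2 rfl))
    · exact mono _ _ (((edges_h k D).1 _ _).2 rfl)

theorem genus_a (k : ℕ) (D : Finset (Fin (k + 1))) (H : PreHypermap (LF k))
    (hH : H.theta = ![h0 k D, t1 k, h2 k D]) : H.eulerGenus = 2 * (D.card : ℤ) := by
  have hc : H.c = 1 := conn_h k D _ (by simp [hH]) (by simp [hH]) (by simp [hH])
  have he : H.e = k + 2 := by rw [e]; simpa [hH] using (edges_h k D).2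
  have hf : H.f = (k + 1) + (k + 1 - D.card) := by
    rw [f]; simpa [hH] using count_h0 k D
  have hv : H.v = (k + 1 - D.card) + 1 := by
    rw [v, Set.pair_comm]; simpa [hH] using count_h2 k D
  have hD : D.card ≤ k + 1 := by simpa using D.card_le_univ
  have hcard : Nat.card (LF k) = (k + 1) * 8 := by simp [LF]
  rw [eulerGenus, chi, hc, he, hf, hv, hcard]
  push_cast [Nat.cast_sub hD]
  omega

theorem genus_b (k : ℕ) (D : Finset (Fin (k + 1))) (H : PreHypermap (LF k))
    (hH : H.theta = ![h2 k D, t1 k, h0 k D]) : H.eulerGenus = 2 * (D.card : ℤ) := by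
  have hc : H.c = 1 := conn_h k D _ (by simp [hH]) (by simp [hH]) (by simp [hH])
  have he : H.e = k + 2 := by rw [e, Set.pair_comm]; simpa [hH] using (edges_h k D).2
  have hf : H.f = (k + 1 - D.card) + 1 := by
    rw [f]; simpa [hH] using count_h2 k D
  have hv : H.v = (k + 1) + (k + 1 - D.card) := by
    rw [v, Set.pair_comm]; simpa [hH] using count_h0 k D
  have hD : D.card ≤ k + 1 := by simpa using D.card_le_univ
  have hcard : Nat.card (LF k) = (k + 1) * 8 := by simp [LF]
  rw [eulerGenus, chi, hc, he, hf, hv, hcard]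
  push_cast [Nat.cast_sub hD]
  omega

theorem ladder_theta (k : ℕ) : (ladder k).theta = ![h0 k ∅, t1 k, h2 k ∅] := by
  funext a ⟨i, b, j⟩
  fin_cases a <;> cases b <;> simp [ladder, h0, h2]

theorem ladder_poly (k : ℕ) :
    (ladder k).pdPoly = Polynomial.C 2 * (1 + Polynomial.X ^ 2) ^ (k + 1) := by
  rw [pdPoly_eq (ladder k) (eg k)]
  · have hu : (Finset.univ : Finset (Option (Fin (k + 1))))
        = insert none (Finset.univ.image some) := by
      ext o; cases o <;> simp
    rw [hu, Finset.sum_powerset_insert (by simp), Finset.powerset_image,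
      Finset.sum_image (fun a _ b _ h => Finset.image_injective (Option.some_injective _) h),
      Finset.sum_image (fun a _ b _ h => Finset.image_injective (Option.some_injective _) h)]
    have s1 : ∀ D : Finset (Fin (k + 1)),
        (((ladder k).pdual {x | eg k x ∈ D.image some}).eulerGenus).toNat = 2 * D.card := by
      intro D; rw [genus_a k D _ (pd_some k D)]; omega
    have s2 : ∀ D : Finset (Fin (k + 1)),
        (((ladder k).pdual {x | eg k x ∈ insert none (D.image some)}).eulerGenus).toNat
          = 2 * (k + 1 - D.card) := by
      intro D
      rw [genus_b k Dᶜ _ (pd_none k D), Finset.card_compl, Fintype.card_fin]; omega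
    simp only [s1, s2]
    have e1 := Finset.sum_pow_mul_eq_add_pow (Polynomial.X ^ 2 : Polynomial ℕ) 1
      (Finset.univ : Finset (Fin (k + 1)))
    have e2 := Finset.sum_pow_mul_eq_add_pow 1 (Polynomial.X ^ 2 : Polynomial ℕ)
      (Finset.univ : Finset (Fin (k + 1)))
    simp only [one_pow, mul_one, one_mul, ← pow_mul, Finset.card_univ, Fintype.card_fin] at e1 e2
    rw [e1, e2, add_comm (Polynomial.X ^ 2) 1, ← two_mul]
    simp
  · rintro (_ | i)
    · exact ⟨(0, true, 0), rfl⟩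
    · exact ⟨(i, false, 0), rfl⟩
  · have := (edges_h k ∅).1
    simpa [ladder_theta] using this

/-- one-hyperedge map -/
def dot : PreHypermap Bool where
  theta := fun _ => not

theorem dot_count (fs : Set (Bool → Bool)) (h : not ∈ fs) :
    (∀ x y, orbitRel fs x y ↔ () = ()) ∧ orbitCount fs = 1 := by
  have := orbitCount_of_section (T := Unit) fs (fun _ => ()) (fun _ => true)
    (by simp) (by simp) ?_
  · exact ⟨this.1, this.2.trans (by simp)⟩
  · intro b
    cases b
    · exact step _ h (orefl _)
    · exact orefl _

theorem dot_pdual (S : Set Bool) : dot.pdual S = dot := by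
  simp [pdual, dot]

theorem dot_genus : dot.eulerGenus = 0 := by
  have hc : dot.c = 1 := (dot_count _ (by simp [dot])).2
  have he : dot.e = 1 := (dot_count _ (by simp [dot])).2
  have hf : dot.f = 1 := (dot_count _ (by simp [dot])).2
  have hv : dot.v = 1 := (dot_count _ (by simp [dot])).2
  rw [eulerGenus, chi, hc, he, hf, hv]
  simp

end PreHypermap

open PreHypermap in
/-- For every `n ≥ 1` there is a connected hypermap with exactly `n` hyperedges (the
hyper-ladder map) whose partial-dual Euler-genus polynomial is `2 (1 + z²)^(n-1)`. -/
theorem statement_16 :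
    ∀ n : ℕ, 1 ≤ n →
      ∃ (F : Type) (_ : Fintype F) (H : PreHypermap F),
        H.IsHypermap ∧ H.Connected ∧ H.e = n ∧
        H.pdPoly = Polynomial.C 2 * (1 + Polynomial.X ^ 2) ^ (n - 1) := by
  intro n hn
  obtain ⟨n, rfl⟩ := Nat.exists_eq_add_of_le' hn
  cases n with
  | zero =>
    refine ⟨Bool, inferInstance, dot, ?_, ?_, ?_, ?_⟩
    · intro i
      exact ⟨Bool.not_not, by simp [dot]⟩
    · exact (dot_count _ (by simp [dot])).2
    · exact (dot_count _ (by simp [dot])).2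
    · rw [pdPoly_eq dot (fun _ => ()) (fun _ => ⟨true, rfl⟩) (dot_count _ (by simp [dot])).1]
      simp [dot_pdual, dot_genus]
  | succ k =>
    refine ⟨LF k, inferInstance, ladder k, ladder_isHypermap k, ?_, ?_, ?_⟩
    · exact conn_h k ∅ _ (by simp [ladder_theta]) (by simp [ladder_theta])
        (by simp [ladder_theta])
    · rw [e]; simpa [ladder_theta] using (edges_h k ∅).2
    · exact ladder_poly k
end

section
/- Let H = (F, θ₀, θ₁, θ₂) be a connected combinatorial hypermap with |F| = 2·(v(H) + e(H) − 1) (i.e. its bipartite incidence graph is a tree). Then H has exactly one face, f(H) = 1, and Euler genus zero, ε(H) = 0. -/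
open Classical

namespace PreHypermap

/-- Functions to `ZMod 2` invariant under all maps in `fs`. -/
def invFun2 {F : Type} (fs : Set (F → F)) : Submodule (ZMod 2) (F → ZMod 2) where
  carrier := {g | ∀ f ∈ fs, ∀ x, g (f x) = g x}
  add_mem' := by
    intro a b ha hb f hf x
    simp [ha f hf x, hb f hf x]
  zero_mem' := by
    intro f hf x
    rfl
  smul_mem' := by
    intro c a ha f hf x
    simp [ha f hf x]

theorem mem_invFun2 {F : Type} (fs : Set (F → F)) (g : F → ZMod 2) :
    g ∈ invFun2 fs ↔ ∀ f ∈ fs, ∀ x, g (f x) = g x := Iff.rfl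

theorem finrank_invFun2 {F : Type} [Fintype F] (fs : Set (F → F)) :
    Module.finrank (ZMod 2) (invFun2 fs) = orbitCount fs := by
  let L : (Quotient (orbitSetoid fs) → ZMod 2) →ₗ[ZMod 2] (F → ZMod 2) :=
    LinearMap.funLeft (ZMod 2) (ZMod 2) (Quotient.mk (orbitSetoid fs))
  have hinj : Function.Injective L :=
    LinearMap.funLeft_injective_of_surjective _ _ _ Quotient.mk_surjective
  have hr : LinearMap.range L = invFun2 fs := by
    ext g
    rw [mem_invFun2]
    constructor
    · rintro ⟨h, rfl⟩ f hf x
      change h _ = h _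
      congr 1
      apply Quotient.sound
      exact Relation.EqvGen.symm _ _ (Relation.EqvGen.rel _ _ ⟨f, hf, rfl⟩)
    · intro hg
      have key : ∀ x y : F, (orbitSetoid fs).r x y → g x = g y := by
        intro x y hxy
        induction hxy with
        | rel x y h => obtain ⟨f, hf, rfl⟩ := h; exact (hg f hf x).symm
        | refl x => rfl
        | symm x y _ ih => exact ih.symm
        | trans x y z _ _ h1 h2 => exact h1.trans h2
      exact ⟨Quotient.lift g key, rfl⟩
  have := Fintype.ofFinite (Quotient (orbitSetoid fs))
  rw [← hr, LinearMap.finrank_range_of_inj hinj, Module.finrank_fintype_fun_eq_card, orbitCount,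
    Nat.card_eq_fintype_card]

theorem two_mul_orbitCount_le {F : Type} [Fintype F] (t : F → F) (ht : ∀ x, t x ≠ x) :
    2 * orbitCount {t} ≤ Nat.card F := by
  have := Fintype.ofFinite (Quotient (orbitSetoid {t}))
  rw [orbitCount, Nat.card_eq_fintype_card, Nat.card_eq_fintype_card]
  rw [← Finset.card_univ, ← Finset.card_univ]
  apply Finset.mul_card_image_le_card_of_maps_to (f := Quotient.mk (orbitSetoid {t}))
  · intro x _
    exact Finset.mem_univ _
  · intro q _
    obtain ⟨x, rfl⟩ := Quotient.mk_surjective q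
    rw [show (2 : ℕ) = ({t x, x} : Finset F).card from (Finset.card_pair (ht x)).symm]
    apply Finset.card_le_card
    intro y hy
    simp only [Finset.mem_insert, Finset.mem_singleton] at hy
    simp only [Finset.mem_filter, Finset.mem_univ, true_and]
    rcases hy with rfl | rfl
    · apply Quotient.sound
      exact Relation.EqvGen.symm _ _ (Relation.EqvGen.rel _ _ ⟨t, rfl, rfl⟩)
    · rfl

theorem sum_inv_zero {F : Type} [Fintype F] (t : F → F) (hi : Function.Involutive t)
    (ht : ∀ x, t x ≠ x) (g : F → ZMod 2) (hg : ∀ x, g (t x) = g x) : ∑ x, g x = 0 := by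
  apply Finset.sum_involution (fun x _ => t x)
  · intro x _
    rw [hg, CharTwo.add_self_eq_zero]
  · intro x _ _
    exact ht x
  · intro x _
    exact Finset.mem_univ _
  · intro x _
    exact hi x

end PreHypermap

open PreHypermap in
/-- A connected hypermap with `|F| = 2 (v(H) + e(H) - 1)` (i.e. whose bipartite incidence
graph is a tree) has exactly one face and Euler genus zero. -/
theorem statement_19 {F : Type} [Fintype F] (H : PreHypermap F)
    (hH : H.IsHypermap) (hconn : H.Connected)
    (htree : (Nat.card F : ℤ) = 2 * ((H.v : ℤ) + (H.e : ℤ) - 1)) :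
    H.f = 1 ∧ H.eulerGenus = 0 := by
  have hf : H.f = 1 := by
    have hA := finrank_invFun2 {H.theta 1, H.theta 2}
    have hB := finrank_invFun2 {H.theta 0, H.theta 2}
    have hC := finrank_invFun2 {H.theta 2}
    have hD := finrank_invFun2 {H.theta 0, H.theta 1}
    have hE := finrank_invFun2 {H.theta 0, H.theta 1, H.theta 2}
    have hAB : invFun2 {H.theta 1, H.theta 2} ⊓ invFun2 {H.theta 0, H.theta 2}
        = invFun2 {H.theta 0, H.theta 1, H.theta 2} := by
      ext g
      simp only [Submodule.mem_inf, mem_invFun2, Set.mem_insert_iff, Set.mem_singleton_iff,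
        forall_eq_or_imp, forall_eq]
      tauto
    have hle : invFun2 {H.theta 1, H.theta 2} ⊔ invFun2 {H.theta 0, H.theta 2}
        ≤ invFun2 {H.theta 2} := by
      apply sup_le
      · intro g hg f hf
        exact hg f (Or.inr hf)
      · intro g hg f hf
        exact hg f (Or.inr hf)
    have h2 := two_mul_orbitCount_le (H.theta 2) (hH 2).2
    have hdim := Submodule.finrank_sup_add_finrank_inf_eq
      (invFun2 {H.theta 1, H.theta 2}) (invFun2 {H.theta 0, H.theta 2})
    rw [hAB, hA, hB, hE] at hdim
    have hc : orbitCount {H.theta 0, H.theta 1, H.theta 2} = 1 := hconn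
    have heq : invFun2 {H.theta 1, H.theta 2} ⊔ invFun2 {H.theta 0, H.theta 2}
        = invFun2 {H.theta 2} := by
      apply Submodule.eq_of_le_of_finrank_le hle
      rw [hC]
      simp only [v, e] at htree
      omega
    have hDE : invFun2 {H.theta 0, H.theta 1} = invFun2 {H.theta 0, H.theta 1, H.theta 2} := by
      apply le_antisymm
      · intro g hg
        have hg0 : ∀ x, g (H.theta 0 x) = g x := hg _ (Or.inl rfl)
        have hg1 : ∀ x, g (H.theta 1 x) = g x := hg _ (Or.inr rfl)
        have hg2 : ∀ x, g (H.theta 2 x) = g x := by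
          intro x
          have hi := (hH 2).1
          have hx := (hH 2).2 x
          let h : F → ZMod 2 := fun y => if y ∈ ({H.theta 2 x, x} : Finset F) then 1 else 0
          have hh : h ∈ invFun2 {H.theta 2} := by
            rintro f rfl y
            have : H.theta 2 y ∈ ({H.theta 2 x, x} : Finset F)
                ↔ y ∈ ({H.theta 2 x, x} : Finset F) := by
              simp only [Finset.mem_insert, Finset.mem_singleton, hi.injective.eq_iff]
              rw [hi.eq_iff, or_comm, eq_comm]
            simp only [h, this]
          rw [← heq, Submodule.mem_sup] at hh
          obtain ⟨a, ha, b, hb, hab⟩ := hh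
          have ha1 : ∀ x, a (H.theta 1 x) = a x := ha _ (Or.inl rfl)
          have hb0 : ∀ x, b (H.theta 0 x) = b x := hb _ (Or.inl rfl)
          have s1 := sum_inv_zero _ (hH 1).1 (hH 1).2 (fun y => g y * a y)
            (fun y => by simp only [hg1, ha1])
          have s0 := sum_inv_zero _ (hH 0).1 (hH 0).2 (fun y => g y * b y)
            (fun y => by simp only [hg0, hb0])
          have s : ∑ y, g y * h y = 0 := by
            rw [← hab]
            simp only [Pi.add_apply, mul_add, Finset.sum_add_distrib, s1, s0, add_zero]
          have s' : ∑ y, g y * h y = g (H.theta 2 x) + g x := by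
            simp only [h, mul_ite, mul_one, mul_zero]
            rw [Finset.sum_ite_mem, Finset.univ_inter, Finset.sum_pair hx]
          rw [s'] at s
          exact CharTwo.add_eq_zero.mp s
        rw [mem_invFun2]
        simp only [Set.mem_insert_iff, Set.mem_singleton_iff, forall_eq_or_imp, forall_eq]
        exact ⟨hg0, hg1, hg2⟩
      · intro g hg f hf
        apply hg f
        rcases hf with h | h
        · exact Or.inl h
        · exact Or.inr (Or.inl h)
    rw [hDE, hE, hc] at hD
    exact hD.symm
  refine ⟨hf, ?_⟩
  have hc : H.c = 1 := hconn
  rw [eulerGenus, chi, hf, hc, htree]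
  push_cast
  omega
end
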